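/- arXiv:1808.00634 — 6 statements merged into one kernel-verified Lean document; each statement's English description precedes it below -/
import Mathlib

section
/- For every n ≥ 1, every group homomorphism χ from the Houghton group H_n to the additive group of real numbers ℝ is a real linear combination of χ_1,…,χ_n: there exist real numbers a_1,…,a_n (and one may take a_n = 0) such that χ(η) = a_1·χ_1(η) + ⋯ + a_n·χ_n(η) for every η ∈ H_n. -/
/-- A map `f : {1,…,n} × ℕ → {1,…,n} × ℕ` is an *eventual translation* if for each
`i` there exist `m_i ∈ ℤ` and `N_i ∈ ℕ` with `f (i, x) = (i, x + m_i)` for all `x ≥ N_i`. -/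
def IsEvTrans {n : ℕ} (f : Fin n × ℕ → Fin n × ℕ) : Prop :=
  ∀ i : Fin n, ∃ m : ℤ, ∃ N : ℕ, ∀ x : ℕ, N ≤ x →
    (f (i, x)).1 = i ∧ ((f (i, x)).2 : ℤ) = (x : ℤ) + m

lemma IsEvTrans.id {n : ℕ} : IsEvTrans (id : Fin n × ℕ → Fin n × ℕ) :=
  fun i => ⟨0, 0, fun x _ => by simp⟩

lemma IsEvTrans.comp {n : ℕ} {f g : Fin n × ℕ → Fin n × ℕ}
    (hf : IsEvTrans f) (hg : IsEvTrans g) : IsEvTrans (f ∘ g) := by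
  intro i
  obtain ⟨m₁, N₁, h₁⟩ := hg i
  obtain ⟨m₂, N₂, h₂⟩ := hf i
  refine ⟨m₁ + m₂, max N₁ ((N₂ : ℤ) - m₁).toNat, fun x hx => ?_⟩
  have hx₁ : N₁ ≤ x := le_trans (le_max_left _ _) hx
  obtain ⟨hg1, hg2⟩ := h₁ x hx₁
  have hgix : g (i, x) = (i, (g (i, x)).2) := Prod.ext hg1 rfl
  have hxa : ((N₂ : ℤ) - m₁).toNat ≤ x := le_trans (le_max_right _ _) hx
  have hxb : (N₂ : ℤ) - m₁ ≤ ((((N₂ : ℤ) - m₁).toNat : ℤ)) := Int.self_le_toNat _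
  have hyN : N₂ ≤ (g (i, x)).2 := by
    have : (N₂ : ℤ) ≤ ((g (i, x)).2 : ℤ) := by omega
    exact_mod_cast this
  obtain ⟨hf1, hf2⟩ := h₂ (g (i, x)).2 hyN
  constructor
  · show (f (g (i, x))).1 = i
    rw [hgix]; exact hf1
  · show ((f (g (i, x))).2 : ℤ) = (x : ℤ) + (m₁ + m₂)
    rw [hgix, hf2, hg2]; ring

lemma IsEvTrans.inv {n : ℕ} {f : Equiv.Perm (Fin n × ℕ)} (hf : IsEvTrans ⇑f) :
    IsEvTrans ⇑f.symm := by
  intro i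
  obtain ⟨m, N, h⟩ := hf i
  refine ⟨-m, ((N : ℤ) + m).toNat, fun y hy => ?_⟩
  have hy' : (N : ℤ) + m ≤ (y : ℤ) :=
    le_trans (Int.self_le_toNat _) (by exact_mod_cast hy)
  set x := ((y : ℤ) - m).toNat with hxdef
  have hx : (x : ℤ) = (y : ℤ) - m := Int.toNat_of_nonneg (by omega)
  have hxN : N ≤ x := by omega
  obtain ⟨h1, h2⟩ := h x hxN
  have hfx : f (i, x) = (i, y) := by
    have h3 : ((f (i, x)).2 : ℤ) = (y : ℤ) := by rw [h2]; omega
    exact Prod.ext h1 (by exact_mod_cast h3)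
  have hsymm : f.symm (i, y) = (i, x) := by rw [← hfx]; exact f.symm_apply_apply _
  rw [hsymm]
  exact ⟨rfl, by omega⟩

/-- The Houghton group `H_n`, as the subgroup of `Equiv.Perm (Fin n × ℕ)` consisting
of the eventual translations. -/
def Houghton (n : ℕ) : Subgroup (Equiv.Perm (Fin n × ℕ)) where
  carrier := {η | IsEvTrans ⇑η}
  one_mem' := IsEvTrans.id
  mul_mem' := fun ha hb => IsEvTrans.comp ha hb
  inv_mem' := fun ha => IsEvTrans.inv ha

/-- The monoid `M_n` of injective eventual translations, as a submonoid of
`Function.End (Fin n × ℕ)` (whose multiplication is composition). -/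
def Mmon (n : ℕ) : Submonoid (Function.End (Fin n × ℕ)) where
  carrier := {f | Function.Injective f ∧ IsEvTrans f}
  one_mem' := ⟨fun _ _ h => h, IsEvTrans.id⟩
  mul_mem' := fun ha hb => ⟨ha.1.comp hb.1, IsEvTrans.comp ha.2 hb.2⟩

open Classical in
/-- `χ_i(f)` : the unique integer `m` such that `f (i, x) = (i, x + m)` for all
sufficiently large `x` (or junk value `0` if no such integer exists). -/
noncomputable def chiF (n : ℕ) (i : Fin n) (f : Fin n × ℕ → Fin n × ℕ) : ℤ :=
  if h : ∃ m : ℤ, ∃ N : ℕ, ∀ x : ℕ, N ≤ x →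
      (f (i, x)).1 = i ∧ ((f (i, x)).2 : ℤ) = (x : ℤ) + m
  then h.choose else 0

/-! A permutation in `H_n` on which all the `χ_i` vanish has finite support, hence is a product of
transpositions, and a homomorphism to an abelian group without elements of order two kills every
transposition. So `χ` depends only on the vector `(χ_1, …, χ_n)`. The coordinates of this vector sum
to zero (count the images of the points at height below `N` for large `N`), so it is a combination
of the vectors `e_i - e_l`, and each of these is realised by an explicit element `t_i` that shifts
points from ray `l` to ray `i`. The coefficients are therefore `a_i = χ(t_i)`, with `a_l = 0`.
-/

section HomOfKerLe

variable {G A ι : Type*} [Group G] [CommGroup A]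

lemma map_prod_toList_zpow (f : G →* A) (s : Finset ι) (t : ι → G) (c : ι → ℤ) :
    f (s.toList.map fun i => t i ^ c i).prod = ∏ i ∈ s, f (t i) ^ c i := by
  simp only [map_list_prod, List.map_map, Function.comp_def, map_zpow, Finset.prod_map_toList]

lemma map_eq_prod_zpow_of_ker_le {B : Type*} [CommGroup B] {ξ : G →* B} {χ : G →* A}
    (hker : ξ.ker ≤ χ.ker) {s : Finset ι} {t : ι → G} {c : ι → ℤ} {g : G}
    (hg : ξ g = ∏ i ∈ s, ξ (t i) ^ c i) : χ g = ∏ i ∈ s, χ (t i) ^ c i := by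
  rw [← map_prod_toList_zpow] at hg ⊢
  exact χ.eq_iff.2 (hker (ξ.eq_iff.1 hg))

end HomOfKerLe

lemma sum_smul_single_sub_single {R ι : Type*} [Ring R] [Fintype ι] [DecidableEq ι] {c : ι → R}
    (hc : ∑ i, c i = 0) (l : ι) : ∑ i, c i • (Pi.single i 1 - Pi.single l 1) = c := by
  simp only [smul_sub, Finset.sum_sub_distrib, ← Finset.sum_smul, hc, zero_smul, sub_zero]
  exact (pi_eq_sum_univ' c).symm

section EventuallyShifts

open Filter

variable {n : ℕ} {f g : Fin n × ℕ → Fin n × ℕ} {i : Fin n} {m m' : ℤ}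

/-- `f` acts on ray `i`, sufficiently far out, as the translation by `m`. This is the condition
defining the value `m = χ_i(f)`, phrased with a filter so that finitely many rays can be handled
simultaneously. -/
def EventuallyShifts (f : Fin n × ℕ → Fin n × ℕ) (i : Fin n) (m : ℤ) : Prop :=
  ∀ᶠ x : ℕ in atTop, (f (i, x)).1 = i ∧ ((f (i, x)).2 : ℤ) = x + m

lemma IsEvTrans.exists_eventuallyShifts (hf : IsEvTrans f) (i : Fin n) :
    ∃ m, EventuallyShifts f i m :=
  (hf i).imp fun _ => eventually_atTop.2

namespace EventuallyShifts

lemma isEvTrans {m : Fin n → ℤ} (h : ∀ i, EventuallyShifts f i (m i)) : IsEvTrans f :=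
  fun i => ⟨m i, eventually_atTop.1 (h i)⟩

lemma unique (h : EventuallyShifts f i m) (h' : EventuallyShifts f i m') : m = m' := by
  obtain ⟨x, ⟨-, hx⟩, ⟨-, hx'⟩⟩ := (h.and h').exists
  omega

lemma chiF_eq (h : EventuallyShifts f i m) : chiF n i f = m := by
  have hex : ∃ m : ℤ, ∃ N : ℕ, ∀ x : ℕ, N ≤ x →
      (f (i, x)).1 = i ∧ ((f (i, x)).2 : ℤ) = (x : ℤ) + m := ⟨m, eventually_atTop.1 h⟩
  rw [chiF, dif_pos hex]
  exact unique (eventually_atTop.2 hex.choose_spec) h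

lemma comp (hf : EventuallyShifts f i m) (hg : EventuallyShifts g i m') :
    EventuallyShifts (f ∘ g) i (m + m') := by
  obtain ⟨N, hN⟩ := eventually_atTop.1 hf
  filter_upwards [hg, eventually_ge_atTop (N - m').toNat] with x ⟨hray, hheight⟩ hx
  obtain ⟨hray', hheight'⟩ := hN (g (i, x)).2 (by omega)
  rw [Function.comp_apply, show g (i, x) = (i, (g (i, x)).2) from Prod.ext hray rfl]
  exact ⟨hray', by omega⟩

end EventuallyShifts

lemma IsEvTrans.eventuallyShifts_chiF (hf : IsEvTrans f) (i : Fin n) :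
    EventuallyShifts f i (chiF n i f) := by
  obtain ⟨m, hm⟩ := hf.exists_eventuallyShifts i
  rwa [hm.chiF_eq]

lemma IsEvTrans.exists_forall_ge (hf : IsEvTrans f) :
    ∃ N : ℕ, ∀ x ≥ N, ∀ i, (f (i, x)).1 = i ∧ ((f (i, x)).2 : ℤ) = x + chiF n i f :=
  eventually_atTop.1 (eventually_all.2 hf.eventuallyShifts_chiF)

lemma isEvTrans_swap (p q : Fin n × ℕ) : IsEvTrans (Equiv.swap p q) := by
  refine EventuallyShifts.isEvTrans (m := 0) fun i => ?_
  filter_upwards [eventually_gt_atTop p.2, eventually_gt_atTop q.2] with x hp hq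
  have hxp : (i, x) ≠ p := fun h => hp.ne' (congrArg Prod.snd h)
  have hxq : (i, x) ≠ q := fun h => hq.ne' (congrArg Prod.snd h)
  simp [Equiv.swap_apply_of_ne_of_ne hxp hxq]

end EventuallyShifts

section RayBox

variable {n : ℕ}

/-- The points of `{1,…,n} × ℕ` whose height on ray `i` is less than `k i`. Comparing the
cardinalities of such a set and of its image under `η ∈ H_n` gives `∑ χ_i(η) = 0`. -/
def rayBox (k : Fin n → ℕ) : Finset (Fin n × ℕ) :=
  (Finset.univ.sigma fun i => Finset.range (k i)).map (Equiv.sigmaEquivProd (Fin n) ℕ).toEmbedding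

lemma mem_rayBox {k : Fin n → ℕ} {p : Fin n × ℕ} : p ∈ rayBox k ↔ p.2 < k p.1 := by
  simp [rayBox, Finset.mem_map_equiv]

lemma card_rayBox (k : Fin n → ℕ) : (rayBox k).card = ∑ i, k i := by
  simp [rayBox]

lemma map_rayBox_const {σ : Equiv.Perm (Fin n × ℕ)} {N : ℕ} {m : Fin n → ℤ}
    (h : ∀ x ≥ N, ∀ i, (σ (i, x)).1 = i ∧ ((σ (i, x)).2 : ℤ) = x + m i) :
    (rayBox fun _ => N).map σ.toEmbedding = rayBox fun i => (N + m i).toNat := by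
  ext p
  obtain ⟨⟨i, x⟩, rfl⟩ := σ.surjective p
  rw [Finset.mem_map_equiv, σ.symm_apply_apply, mem_rayBox, mem_rayBox, ← not_iff_not]
  constructor
  · intro hx
    obtain ⟨hray, hheight⟩ := h x (not_lt.1 hx) i
    rw [hray]
    omega
  · intro hσx
    rcases hp : σ (i, x) with ⟨j, y⟩
    simp only [hp] at hσx
    have hN := (h N le_rfl j).2
    obtain ⟨hray, hheight⟩ := h (y - m j).toNat (by omega) j
    have hpre : σ (j, (y - m j).toNat) = σ (i, x) :=
      (Prod.ext hray (by dsimp only; omega)).trans hp.symm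
    have hx := congrArg Prod.snd (σ.injective hpre)
    dsimp only at hx ⊢
    omega

lemma sum_chiF_eq_zero {σ : Equiv.Perm (Fin n × ℕ)} (hσ : IsEvTrans σ) :
    ∑ i, chiF n i σ = 0 := by
  obtain ⟨N, hN⟩ := hσ.exists_forall_ge
  have hnonneg (i : Fin n) : 0 ≤ N + chiF n i σ := (hN N le_rfl i).2 ▸ Int.natCast_nonneg _
  have hcard := congrArg Finset.card (map_rayBox_const hN)
  rw [Finset.card_map, card_rayBox, card_rayBox] at hcard
  have hsum : ∑ _i : Fin n, (N : ℤ) = ∑ i, (N + chiF n i σ) := by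
    simpa only [Nat.cast_sum, Int.toNat_of_nonneg (hnonneg _)] using
      congrArg (Nat.cast : ℕ → ℤ) hcard
  rwa [Finset.sum_add_distrib, left_eq_add] at hsum

end RayBox

section RayShift

variable {n : ℕ} {i l : Fin n}

/-- The permutation that translates ray `l` by `-1` and ray `i` by `1`, sending the initial point of
ray `l` to that of ray `i`. -/
def rayShift (h : i ≠ l) : Equiv.Perm (Fin n × ℕ) where
  toFun p := if p.1 = i then (i, p.2 + 1) else
    if p.1 = l then (if p.2 = 0 then (i, 0) else (l, p.2 - 1)) else p
  invFun p := if p.1 = l then (l, p.2 + 1) else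
    if p.1 = i then (if p.2 = 0 then (l, 0) else (i, p.2 - 1)) else p
  left_inv _ := by grind
  right_inv _ := by grind

lemma eventuallyShifts_rayShift (h : i ≠ l) (j : Fin n) :
    EventuallyShifts (rayShift h) j ((Pi.single i 1 - Pi.single l 1 : Fin n → ℤ) j) := by
  filter_upwards [Filter.eventually_ge_atTop 1] with x hx
  simp only [rayShift, Equiv.coe_fn_mk, Pi.sub_apply, Pi.single_apply]
  grind

end RayShift

namespace Houghton

variable {n : ℕ}

/-- The homomorphism `(χ_1, …, χ_n) : H_n → ℤⁿ`, with `ℤⁿ` written multiplicatively. -/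
noncomputable def chiHom : Houghton n →* Multiplicative (Fin n → ℤ) :=
  MonoidHom.mk' (fun η => .ofAdd fun i => chiF n i η.1) fun η ψ =>
    congrArg Multiplicative.ofAdd <| funext fun i =>
      ((η.2.eventuallyShifts_chiF i).comp (ψ.2.eventuallyShifts_chiF i)).chiF_eq

lemma chiHom_eq {η : Houghton n} {m : Fin n → ℤ} (h : ∀ i, EventuallyShifts η.1 i (m i)) :
    chiHom η = .ofAdd m :=
  congrArg Multiplicative.ofAdd <| funext fun i => (h i).chiF_eq

lemma exists_chiHom_eq_single_sub_single (i l : Fin n) :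
    ∃ t : Houghton n, chiHom t = .ofAdd (Pi.single i 1 - Pi.single l 1) := by
  obtain rfl | h := eq_or_ne i l
  · exact ⟨1, by rw [map_one, sub_self, ofAdd_zero]⟩
  · exact ⟨⟨rayShift h, EventuallyShifts.isEvTrans (eventuallyShifts_rayShift h)⟩,
      chiHom_eq (eventuallyShifts_rayShift h)⟩

lemma chiHom_eq_prod_zpow {l : Fin n} {t : Fin n → Houghton n}
    (ht : ∀ i, chiHom (t i) = .ofAdd (Pi.single i 1 - Pi.single l 1)) (η : Houghton n) :
    chiHom η = ∏ i, chiHom (t i) ^ chiF n i η.1 := by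
  simp only [ht, ← ofAdd_zsmul, ← ofAdd_sum]
  exact congrArg Multiplicative.ofAdd (sum_smul_single_sub_single (sum_chiF_eq_zero η.2) l).symm

lemma mem_closure_isSwap_of_mem_ker_chiHom {η : Houghton n} (hη : η ∈ chiHom.ker) :
    η.1 ∈ Subgroup.closure {σ : Equiv.Perm (Fin n × ℕ) | σ.IsSwap} := by
  have hχ (i : Fin n) : chiF n i η.1 = 0 := congrFun (congrArg Multiplicative.toAdd hη) i
  obtain ⟨N, hN⟩ := η.2.exists_forall_ge
  rw [mem_closure_isSwap']
  refine (rayBox fun _ => N).finite_toSet.subset fun ⟨i, x⟩ hmoved => ?_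
  rw [Finset.mem_coe, mem_rayBox]
  by_contra hx
  obtain ⟨hray, hheight⟩ := hN x (not_lt.1 hx) i
  rw [hχ, add_zero, Nat.cast_inj] at hheight
  exact hmoved (Prod.ext hray hheight)

variable {A : Type*} [CommGroup A]

lemma ker_chiHom_le_ker (hA : ∀ a : A, a * a = 1 → a = 1) (χ : Houghton n →* A) :
    chiHom.ker ≤ χ.ker := by
  have hswap : Subgroup.closure {σ : Equiv.Perm (Fin n × ℕ) | σ.IsSwap} ≤
      χ.ker.map (Houghton n).subtype := by
    rw [Subgroup.closure_le]
    rintro _ ⟨p, q, -, rfl⟩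
    let τ : Houghton n := ⟨Equiv.swap p q, isEvTrans_swap p q⟩
    have hτ : τ * τ = 1 := Subtype.ext (Equiv.swap_mul_self p q)
    exact ⟨τ, hA _ (by rw [← map_mul, hτ, map_one]), rfl⟩
  intro η hη
  exact (Subgroup.mem_map_iff_mem (Houghton n).subtype_injective).1
    (hswap (mem_closure_isSwap_of_mem_ker_chiHom hη))

end Houghton

theorem hom_is_combination_of_chi_general {n : ℕ} {A : Type*} [CommGroup A]
    (hA : ∀ a : A, a * a = 1 → a = 1) (l : Fin n) (χ : Houghton n →* A) :
    ∃ a : Fin n → A, a l = 1 ∧ ∀ η : Houghton n, χ η = ∏ i, a i ^ chiF n i η.1 := by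
  have hker := Houghton.ker_chiHom_le_ker hA χ
  choose t ht using fun i => Houghton.exists_chiHom_eq_single_sub_single i l
  refine ⟨fun i => χ (t i), hker ?_, fun η => ?_⟩
  · rw [MonoidHom.mem_ker, ht, sub_self, ofAdd_zero]
  · exact map_eq_prod_zpow_of_ker_le hker (Houghton.chiHom_eq_prod_zpow ht η)

/-- Every group homomorphism `χ : H_n → (ℝ, +)` is a real linear combination of the
`χ_i`, and one may take the last coefficient to be `0`. -/
theorem hom_is_combination_of_chi (n : ℕ) (hn : 1 ≤ n) (χ : ↥(Houghton n) → ℝ)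
    (hχ : ∀ η ψ : ↥(Houghton n), χ (η * ψ) = χ η + χ ψ) :
    ∃ a : Fin n → ℝ, a ⟨n - 1, by omega⟩ = 0 ∧
      ∀ η : ↥(Houghton n),
        χ η = ∑ i : Fin n, a i * (chiF n i ⇑(η : Equiv.Perm (Fin n × ℕ)) : ℝ) := by
  obtain ⟨a, ha, h⟩ := hom_is_combination_of_chi_general (A := Multiplicative ℝ)
    (fun b => add_self_eq_zero (a := b.toAdd).1) ⟨n - 1, by omega⟩
    (MonoidHom.mk' (fun η => .ofAdd (χ η)) hχ)
  exact ⟨fun i => (a i).toAdd, ha, fun η =>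
    (congrArg Multiplicative.toAdd (h η)).trans (by simp [mul_comm])⟩
end

section
/- For every n ≥ 1 and all φ, φ′ in the monoid M_n, there exists an element η of the Houghton group H_n with φ′ = η ∘ φ if and only if the (finite) complements of the images of φ and φ′ have the same cardinality: |({1,…,n} × ℕ) \ range(φ)| = |({1,…,n} × ℕ) \ range(φ′)|. In other words, the action of H_n on M_n by postcomposition is transitive on each level set of the defect function f(φ) = |({1,…,n} × ℕ) \ range(φ)|. -/
/-!
Two injective maps `f` and `g` into the same set differ by a permutation of that set exactly when
the complements of their ranges are equinumerous: extend the bijection `f x ↦ g x` of the ranges by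
any bijection of the complements. Far out on each ray, an eventual translation is a bijection
between two tails of that ray. Hence its range has finite complement, and a permutation `η` with
`g = η ∘ f` is forced to be, far out, the translation by the difference of the shifts of `g` and
`f`; so every such `η` already lies in the Houghton group.
-/

open Set Filter

lemma exists_equiv_eq_comp_iff {α β γ : Type*} {f : α → β} {g : α → γ}
    (hf : Function.Injective f) (hg : Function.Injective g) :
    (∃ e : β ≃ γ, g = e ∘ f) ↔ Nonempty (↥(range f)ᶜ ≃ ↥(range g)ᶜ) := by
  classical
  let e₀ : range f ≃ range g := (Equiv.ofInjective f hf).symm.trans (Equiv.ofInjective g hg)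
  have he₀ (a : α) : (e₀ ⟨f a, mem_range_self a⟩ : γ) = g a := by
    simp [e₀, Equiv.ofInjective_symm_apply]
  rw [← (Equiv.Set.compl e₀).nonempty_congr, nonempty_subtype]
  refine exists_congr fun e => ?_
  simp only [forall_subtype_range_iff, he₀, funext_iff, Function.comp_apply, eq_comm]

lemma exists_equiv_eq_comp_iff_ncard_compl_range_eq {α β γ : Type*} {f : α → β} {g : α → γ}
    (hf : Function.Injective f) (hg : Function.Injective g)
    (hf_fin : (range f)ᶜ.Finite) (hg_fin : (range g)ᶜ.Finite) :
    (∃ e : β ≃ γ, g = e ∘ f) ↔ (range f)ᶜ.ncard = (range g)ᶜ.ncard := by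
  have := hf_fin.to_subtype
  have := hg_fin.to_subtype
  rw [exists_equiv_eq_comp_iff hf hg, ← Finite.card_eq, Nat.card_coe_set_eq, Nat.card_coe_set_eq]

namespace IsEvTrans

variable {n : ℕ} {f : Fin n × ℕ → Fin n × ℕ}

lemma exists_shift_eventually_exists_apply_eq (hf : IsEvTrans f) (i : Fin n) :
    ∃ m : ℤ, ∀ N : ℕ, ∀ᶠ y : ℕ in atTop, ∃ x ≥ N, f (i, x) = (i, y) ∧ (y : ℤ) = x + m := by
  obtain ⟨m, N₀, hm⟩ := hf i
  refine ⟨m, fun N => ?_⟩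
  filter_upwards [eventually_ge_atTop (max N₀ N + m).toNat] with y hy
  obtain ⟨x, hx⟩ := Int.eq_ofNat_of_zero_le (a := y - m) (by omega)
  obtain ⟨hfst, hsnd⟩ := hm x (by omega)
  exact ⟨x, by omega, Prod.ext hfst (by lia), by lia⟩

lemma finite_compl_range (hf : IsEvTrans f) : (range f)ᶜ.Finite := by
  have hray (i : Fin n) : {y : ℕ | (i, y) ∉ range f}.Finite := by
    rw [← eventually_cofinite, Nat.cofinite_eq_atTop]
    obtain ⟨m, hm⟩ := hf.exists_shift_eventually_exists_apply_eq i
    filter_upwards [hm 0] with y ⟨x, _, hx, _⟩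
    exact ⟨(i, x), hx⟩
  refine (finite_iUnion fun i => (hray i).image (Prod.mk i)).subset ?_
  rintro ⟨i, y⟩ hy
  exact mem_iUnion.2 ⟨i, mem_image_of_mem _ hy⟩

lemma of_comp_right {h : Fin n × ℕ → Fin n × ℕ} (hhf : IsEvTrans (h ∘ f)) (hf : IsEvTrans f) :
    IsEvTrans h := by
  intro i
  obtain ⟨k, N, hk⟩ := hhf i
  obtain ⟨m, hm⟩ := hf.exists_shift_eventually_exists_apply_eq i
  obtain ⟨K, hK⟩ := eventually_atTop.1 (hm N)
  refine ⟨k - m, K, fun y hy => ?_⟩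
  obtain ⟨x, hx, hfx, hyx⟩ := hK y hy
  obtain ⟨hfst, hsnd⟩ := hk x hx
  rw [Function.comp_apply, hfx] at hfst hsnd
  exact ⟨hfst, by omega⟩

end IsEvTrans

/-- For `φ, φ' ∈ M_n`, there is `η ∈ H_n` with `φ' = η ∘ φ` iff the complements of the
images of `φ` and `φ'` have the same cardinality: the action of `H_n` on `M_n` by
postcomposition is transitive on each level set of `f(φ) = |({1,…,n} × ℕ) ∖ range φ|`. -/
theorem houghton_transitive_on_defect_level_sets (n : ℕ) (hn : 1 ≤ n)
    (f g : Function.End (Fin n × ℕ)) (hf : f ∈ Mmon n) (hg : g ∈ Mmon n) :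
    (∃ η : Equiv.Perm (Fin n × ℕ), η ∈ Houghton n ∧ g = ⇑η ∘ f) ↔
      (Set.range f)ᶜ.ncard = (Set.range g)ᶜ.ncard := by
  obtain ⟨hf_inj, hf_ev⟩ := hf
  obtain ⟨hg_inj, hg_ev⟩ := hg
  have mem_houghton (η : Equiv.Perm (Fin n × ℕ)) (hη : g = ⇑η ∘ f) : η ∈ Houghton n :=
    IsEvTrans.of_comp_right (hη ▸ hg_ev) hf_ev
  rw [← exists_equiv_eq_comp_iff_ncard_compl_range_eq hf_inj hg_inj
    hf_ev.finite_compl_range hg_ev.finite_compl_range]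
  exact exists_congr fun η => and_iff_right_of_imp (mem_houghton η)
end

section
/- Fix n ≥ 1 and i ∈ {1,…,n}. Consider the graph whose vertex set is M_n and in which φ and ψ are adjacent whenever ψ = φ ∘ t_l or φ = ψ ∘ t_l for some l ∈ {1,…,n}. Let τ_i ∈ H_n ⊆ M_n be the transposition swapping (i,0) and (i,1) and fixing all other points. Then there is no finite path φ_0, φ_1, …, φ_k in this graph with φ_0 = id, φ_k = τ_i, and χ_i(φ_j) ≤ 0 for every 0 ≤ j ≤ k. Equivalently, the identity and τ_i lie in different connected components of the full subgraph on the vertices φ with χ_i(φ) ≤ 0. -/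
/-- The generator `t_l ∈ M_n`, shifting the `l`-th ray by one. -/
def tFun (n : ℕ) (l : Fin n) : Fin n × ℕ → Fin n × ℕ :=
  fun p => if p.1 = l then (p.1, p.2 + 1) else p

/-! Starting at the identity, right composition with the shifts `t_l` keeps `φ (i, y + m) = (i, y)`
for some `m : ℕ`, with `χ_i(φ) = -m`: composing with `t_i` lowers `m`, undoing it raises `m`, and
`χ_i ≤ 0` forbids lowering `m = 0`. The values of `φ` on the points `(i, y)` with `y < m` are
arbitrary, but whenever `χ_i` is back at `0` there are no such points, so `φ` fixes the `i`-th ray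
pointwise. Reordering points of the ray would require passing through `χ_i > 0`. -/

section

variable {n : ℕ} {i l : Fin n} {f g : Fin n × ℕ → Fin n × ℕ} {m : ℕ}

lemma chiF_eq_of_forall_apply_add {a b : ℕ} (h : ∀ y, f (i, y + a) = (i, y + b)) :
    chiF n i f = b - a := by
  have hex : ∃ m : ℤ, ∃ N : ℕ, ∀ x : ℕ, N ≤ x →
      (f (i, x)).1 = i ∧ ((f (i, x)).2 : ℤ) = (x : ℤ) + m := by
    refine ⟨b - a, a, fun x hx => ?_⟩
    obtain ⟨y, rfl⟩ := Nat.exists_eq_add_of_le' hx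
    simp [h]
  rw [chiF, dif_pos hex]
  obtain ⟨N, hN⟩ := hex.choose_spec
  have hsnd := (hN (N + a) (Nat.le_add_right N a)).2
  rw [h] at hsnd
  push_cast at hsnd
  linarith

lemma chiF_swap (a b : Fin n × ℕ) : chiF n i (Equiv.swap a b) = 0 := by
  have hfix (y : ℕ) :
      Equiv.swap a b (i, y + (a.2 + b.2 + 1)) = (i, y + (a.2 + b.2 + 1)) := by
    refine Equiv.swap_apply_of_ne_of_ne ?_ ?_ <;>
    · intro h
      have hsnd := congrArg Prod.snd h
      dsimp only at hsnd
      omega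
  rw [chiF_eq_of_forall_apply_add hfix, sub_self]

lemma tFun_apply_self (i : Fin n) (y : ℕ) : tFun n i (i, y) = (i, y + 1) := if_pos rfl

lemma tFun_apply_of_ne (h : i ≠ l) (y : ℕ) : tFun n l (i, y) = (i, y) := if_neg h

/-- `f` is a *downshift by `m`* of the `i`-th ray: `f ∘ t_i ^ m` fixes the `i`-th ray pointwise.
The values of `f` at the first `m` points of that ray are left unconstrained. -/
def IsDownshift (i : Fin n) (m : ℕ) (f : Fin n × ℕ → Fin n × ℕ) : Prop :=
  ∀ y, f (i, y + m) = (i, y)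

namespace IsDownshift

lemma chiF_eq (hf : IsDownshift i m f) : chiF n i f = -m := by
  simpa using chiF_eq_of_forall_apply_add (b := 0) hf

lemma chiF_comp_tFun_self_of_zero (hf : IsDownshift i 0 f) : chiF n i (f ∘ tFun n i) = 1 := by
  have hshift (y : ℕ) : (f ∘ tFun n i) (i, y + 0) = (i, y + 1) := by
    rw [Function.comp_apply, tFun_apply_self]
    exact hf (y + 1)
  simpa using chiF_eq_of_forall_apply_add hshift

lemma comp_tFun_self_iff : IsDownshift i m (f ∘ tFun n i) ↔ IsDownshift i (m + 1) f := by
  simp only [IsDownshift, Function.comp_apply, tFun_apply_self, add_assoc]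

lemma comp_tFun_iff_of_ne (h : i ≠ l) : IsDownshift i m (f ∘ tFun n l) ↔ IsDownshift i m f := by
  simp only [IsDownshift, Function.comp_apply, tFun_apply_of_ne h]

lemma exists_comp_tFun (hf : IsDownshift i m f) (hchi : chiF n i (f ∘ tFun n l) ≤ 0) :
    ∃ m', IsDownshift i m' (f ∘ tFun n l) := by
  obtain rfl | hne := eq_or_ne i l
  · cases m with
    | zero => exact absurd hchi (by simp [hf.chiF_comp_tFun_self_of_zero])
    | succ m => exact ⟨m, comp_tFun_self_iff.mpr hf⟩
  · exact ⟨m, (comp_tFun_iff_of_ne hne).mpr hf⟩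

lemma exists_of_comp_tFun (hf : IsDownshift i m (f ∘ tFun n l)) : ∃ m', IsDownshift i m' f := by
  obtain rfl | hne := eq_or_ne i l
  · exact ⟨m + 1, comp_tFun_self_iff.mp hf⟩
  · exact ⟨m, (comp_tFun_iff_of_ne hne).mp hf⟩

lemma exists_of_path {k : ℕ} {p : Fin (k + 1) → Fin n × ℕ → Fin n × ℕ}
    (h0 : IsDownshift i m (p 0)) (hchi : ∀ j, chiF n i (p j) ≤ 0)
    (hstep : ∀ j : Fin k, ∃ l : Fin n,
      p j.succ = p j.castSucc ∘ tFun n l ∨ p j.castSucc = p j.succ ∘ tFun n l)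
    (j : Fin (k + 1)) : ∃ m', IsDownshift i m' (p j) := by
  induction j using Fin.induction with
  | zero => exact ⟨m, h0⟩
  | succ j ih =>
    obtain ⟨m', hm'⟩ := ih
    obtain ⟨l, hl | hl⟩ := hstep j
    · rw [hl]
      exact hm'.exists_comp_tFun (hl ▸ hchi j.succ)
    · exact exists_of_comp_tFun (hl ▸ hm')

end IsDownshift

theorem no_nonpositive_path_from_id_to_transposition_general
    (hf : ∀ y, f (i, y) = (i, y)) (hchi : chiF n i g = 0) (hg : ∃ y, g (i, y) ≠ (i, y)) :
    ¬ ∃ (k : ℕ) (p : Fin (k + 1) → Fin n × ℕ → Fin n × ℕ),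
      p 0 = f ∧ p (Fin.last k) = g ∧ (∀ j, chiF n i (p j) ≤ 0) ∧
      (∀ j : Fin k, ∃ l : Fin n,
        p j.succ = p j.castSucc ∘ tFun n l ∨ p j.castSucc = p j.succ ∘ tFun n l) := by
  rintro ⟨k, p, rfl, rfl, hle, hstep⟩
  obtain ⟨y, hy⟩ := hg
  have h0 : IsDownshift i 0 (p 0) := hf
  obtain ⟨m, hm⟩ := h0.exists_of_path hle hstep (Fin.last k)
  obtain rfl : m = 0 := by simpa [hm.chiF_eq] using hchi
  exact hy (hm y)

end

/-- In the graph on `M_n` where `φ` and `ψ` are adjacent whenever `ψ = φ ∘ t_l` or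
`φ = ψ ∘ t_l`, there is no finite path from the identity to the transposition `τ_i`
(swapping `(i,0)` and `(i,1)`) all of whose vertices `φ_j` satisfy `χ_i(φ_j) ≤ 0`:
the identity and `τ_i` lie in different `{i}`-blankets. -/
theorem no_nonpositive_path_from_id_to_transposition (n : ℕ) (hn : 1 ≤ n) (i : Fin n) :
    ¬ ∃ (k : ℕ) (p : Fin (k + 1) → Function.End (Fin n × ℕ)),
      p 0 = (id : Fin n × ℕ → Fin n × ℕ) ∧
      p (Fin.last k) = ⇑(Equiv.swap ((i, 0) : Fin n × ℕ) ((i, 1) : Fin n × ℕ)) ∧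
      (∀ j : Fin (k + 1), p j ∈ Mmon n ∧ chiF n i (p j) ≤ 0) ∧
      (∀ j : Fin k, ∃ l : Fin n,
        p j.succ = (p j.castSucc) ∘ tFun n l ∨
        p j.castSucc = (p j.succ) ∘ tFun n l) := by
  rintro ⟨k, p, h0, hlast, hM, hstep⟩
  exact no_nonpositive_path_from_id_to_transposition_general (fun _ => rfl) (chiF_swap _ _)
    ⟨0, by simp⟩ ⟨k, p, h0, hlast, fun j => (hM j).2, hstep⟩
end

section
/- For every n ≥ 2 and every i ∈ {1,…,n}, the kernel of the homomorphism χ_i : H_n → ℤ is not finitely generated. -/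
/-!
Suppose `ker χ_i` is finitely generated. Each generator fixes all far enough points of the `i`-th
ray, so some point of that ray is fixed by all of the finitely many generators, hence by `ker χ_i`.
But `ker χ_i` contains every transposition, so it fixes no point.
-/

section

open Filter MulAction

theorem eventually_mem_fixedPoints_of_fg {M α : Type*} [Monoid M] [MulAction M α] [Monoid.FG M]
    {l : Filter α} (h : ∀ g : M, ∀ᶠ a in l, g • a = a) : ∀ᶠ a in l, a ∈ fixedPoints M α := by
  obtain ⟨S, hS⟩ := Monoid.FG.fg_top (M := M)
  have fixed_by_generators : ∀ᶠ a in l, ∀ s ∈ S, s • a = a :=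
    (S.eventually_all).2 fun s _ => h s
  filter_upwards [fixed_by_generators] with a ha g
  have closure_le : Submonoid.closure (S : Set M) ≤ stabilizerSubmonoid M a :=
    Submonoid.closure_le.2 ha
  exact closure_le (hS ▸ Submonoid.mem_top g)

variable {n : ℕ} {f : Fin n × ℕ → Fin n × ℕ}

theorem eventually_ray_fixed_of_cofinite (h : ∀ᶠ p in cofinite, f p = p) (i : Fin n) :
    ∀ᶠ x in atTop, f (i, x) = (i, x) :=
  Nat.cofinite_eq_atTop ▸ (Prod.mk_right_injective i).tendsto_cofinite.eventually h

theorem IsEvTrans.of_eventually_cofinite (h : ∀ᶠ p in cofinite, f p = p) : IsEvTrans f := by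
  intro i
  obtain ⟨N, hN⟩ := eventually_atTop.1 (eventually_ray_fixed_of_cofinite h i)
  exact ⟨0, N, fun x hx => by simp [hN x hx]⟩

theorem IsEvTrans.eventually_chiF (hf : IsEvTrans f) (i : Fin n) :
    ∀ᶠ x in atTop, (f (i, x)).1 = i ∧ ((f (i, x)).2 : ℤ) = x + chiF n i f := by
  rw [chiF, dif_pos (hf i)]
  exact eventually_atTop.2 (hf i).choose_spec

theorem IsEvTrans.chiF_eq_zero_iff (hf : IsEvTrans f) (i : Fin n) :
    chiF n i f = 0 ↔ ∀ᶠ x in atTop, f (i, x) = (i, x) := by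
  constructor
  · intro hχ
    filter_upwards [hf.eventually_chiF i] with x ⟨hfst, hsnd⟩
    exact Prod.ext hfst (by simpa [hχ] using hsnd)
  · intro hfix
    obtain ⟨x, hx, -, hsnd⟩ := (hfix.and (hf.eventually_chiF i)).exists
    simpa [hx] using hsnd

theorem chiF_eq_zero_of_eventually_cofinite (h : ∀ᶠ p in cofinite, f p = p) (i : Fin n) :
    chiF n i f = 0 :=
  ((IsEvTrans.of_eventually_cofinite h).chiF_eq_zero_iff i).2 (eventually_ray_fixed_of_cofinite h i)

theorem exists_mem_houghton_chiF_eq_zero_apply_ne (i j : Fin n) (x : ℕ) :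
    ∃ η : Equiv.Perm (Fin n × ℕ), (η ∈ Houghton n ∧ chiF n i η = 0) ∧ η (j, x) ≠ (j, x) := by
  have hswap : ∀ᶠ p in cofinite, Equiv.swap (j, x) (j, x + 1) p = p :=
    finite_compl_fixedBy_swap
  exact ⟨Equiv.swap (j, x) (j, x + 1),
    ⟨.of_eventually_cofinite hswap, chiF_eq_zero_of_eventually_cofinite hswap i⟩, by simp⟩

theorem ker_chi_not_fg_general (n : ℕ) (i : Fin n) (K : Subgroup (Equiv.Perm (Fin n × ℕ)))
    (hK : ∀ η ∈ K, η ∈ Houghton n ∧ chiF n i η = 0)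
    (hmove : ∃ᶠ x in atTop, ∃ η ∈ K, η (i, x) ≠ (i, x)) :
    ¬ Group.FG K := by
  intro _
  have eventually_fixed : ∀ η : K, ∀ᶠ p in map (Prod.mk i) atTop, η • p = p := fun η =>
    (IsEvTrans.chiF_eq_zero_iff (hK η η.2).1 i).1 (hK η η.2).2
  have eventually_all_fixed : ∀ᶠ x in atTop, (i, x) ∈ fixedPoints K (Fin n × ℕ) :=
    eventually_mem_fixedPoints_of_fg eventually_fixed
  obtain ⟨x, ⟨η, hη, hne⟩, hx⟩ := (hmove.and_eventually eventually_all_fixed).exists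
  exact hne (hx ⟨η, hη⟩)

end

/-- For every `n ≥ 2` and every `i`, the kernel of `χ_i : H_n → ℤ` is not finitely
generated. -/
theorem ker_chi_not_fg (n : ℕ) (hn : 2 ≤ n) (i : Fin n)
    (K : Subgroup (Equiv.Perm (Fin n × ℕ)))
    (hK : ∀ η : Equiv.Perm (Fin n × ℕ),
      η ∈ K ↔ η ∈ Houghton n ∧ chiF n i ⇑η = 0) :
    ¬ Group.FG ↥K := by
  refine ker_chi_not_fg_general n i K (fun η => (hK η).1) (.of_forall fun x => ?_)
  simpa only [hK] using exists_mem_houghton_chiF_eq_zero_apply_ne i i x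
end

section
/- For every n ≥ 3, the kernel of the homomorphism χ_1 − χ_2 : H_n → ℤ (sending η to χ_1(η) − χ_2(η)) is a finitely generated group. -/
/-!
The homomorphism `χ = (χ_1, …, χ_n) : H_n → ℤⁿ` has kernel the finitary permutations, which are
generated by the transpositions. A subgroup `K` between `ker χ` and `H_n` has finitely generated
image in `ℤⁿ`, so it is enough to find finitely many elements of `K` that generate all the
transpositions. If every `χ_i` is nonzero on `K`, then some element of `K` is a nontrivial
translation far out on the ray `i`, and conjugation by it carries the transpositions of points near
the origin outwards along that ray; hence finitely many transpositions suffice. For the kernel of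
`χ_1 - χ_2` the needed elements exist because, given a ray, the coefficients `(1, -1, 0, …, 0)` are
not constant on the other rays.
-/

open Filter Equiv

section FinitelyGenerated

lemma group_fg_of_ker_le_of_fg_range {G A : Type*} [Group G] [Group A] (φ : G →* A)
    {L : Subgroup G} (hL : L.FG) (hker : φ.ker ≤ L) (hφ : φ.range.FG) : Group.FG G := by
  classical
  obtain ⟨T, hT⟩ := hφ
  have hTφ : (T : Set A) ⊆ φ '' Set.univ := by
    rw [Set.image_univ, ← MonoidHom.coe_range, ← hT]
    exact Subgroup.subset_closure
  obtain ⟨S, -, rfl⟩ := Finset.subset_set_image_iff.mp hTφ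
  have hmap : (L ⊔ Subgroup.closure (S : Set G)).map φ = (⊤ : Subgroup G).map φ := by
    refine le_antisymm (Subgroup.map_mono le_top) ?_
    rw [← MonoidHom.range_eq_map, ← hT, Finset.coe_image, ← MonoidHom.map_closure]
    exact Subgroup.map_mono le_sup_right
  have htop : L ⊔ Subgroup.closure (S : Set G) = ⊤ :=
    Subgroup.map_injective_of_ker_le φ (hker.trans le_sup_left) le_top hmap
  rw [Group.fg_def, ← htop]
  exact hL.sup ⟨S, rfl⟩

lemma subgroupOf_fg {G : Type*} [Group G] {K L : Subgroup G} (hLK : L ≤ K) (hL : L.FG) :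
    (L.subgroupOf K).FG := by
  rw [← Group.fg_iff_subgroup_fg] at hL ⊢
  exact Group.fg_of_surjective (f := (Subgroup.subgroupOfEquivOfLe hLK).symm.toMonoidHom)
    (Subgroup.subgroupOfEquivOfLe hLK).symm.surjective

lemma subgroup_multiplicative_fg {V : Type*} [AddCommGroup V] [IsNoetherian ℤ V]
    (P : Subgroup (Multiplicative V)) : P.FG := by
  obtain ⟨Q, rfl⟩ := AddSubgroup.toSubgroup.surjective P
  rw [← AddSubgroup.fg_iff_mul_fg]
  exact (Submodule.fg_iff_addSubgroup_fg _).mp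
    (IsNoetherian.noetherian (AddSubgroup.toIntSubmodule Q))

end FinitelyGenerated

section Swaps

variable {α : Type*} [DecidableEq α] {L : Subgroup (Perm α)}

lemma mem_of_finite_compl_fixedBy (hswap : ∀ p q, swap p q ∈ L) {f : Perm α}
    (hf : (MulAction.fixedBy α f)ᶜ.Finite) : f ∈ L := by
  refine (Subgroup.closure_le L).mpr ?_ (mem_closure_isSwap'.mpr hf)
  rintro _ ⟨p, q, -, rfl⟩
  exact hswap p q

lemma swap_mem_of_shift {g : Perm α} (hg : g ∈ L) {a : ℕ → α} {k N : ℕ} (hk : 0 < k)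
    (hshift : ∀ x ≥ N, g (a x) = a (x + k)) (hbase : ∀ x ≤ N + k, swap (a x) (a N) ∈ L) (x : ℕ) :
    swap (a x) (a N) ∈ L := by
  induction x using Nat.strong_induction_on with
  | _ x ih =>
    obtain hx | hx := le_or_gt x (N + k)
    · exact hbase x hx
    · have hconj : swap (a x) (a (N + k)) ∈ L := by
        have := L.mul_mem (L.mul_mem hg (ih (x - k) (by omega))) (L.inv_mem hg)
        rwa [← swap_apply_apply, hshift _ (by omega), hshift _ le_rfl,
          Nat.sub_add_cancel (by omega)] at this
      exact SubmonoidClass.swap_mem_trans L hconj (hbase _ le_rfl)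

lemma finite_setOf_snd_le {ι : Type*} [Finite ι] (b : ι → ℕ) :
    {p : ι × ℕ | p.2 ≤ b p.1}.Finite := by
  refine (Set.finite_iUnion fun i => (Set.finite_Iic (b i)).image (Prod.mk i)).subset ?_
  rintro ⟨i, x⟩ hx
  exact Set.mem_iUnion.mpr ⟨i, x, hx, rfl⟩

lemma exists_fg_le_forall_swap_mem {ι : Type*} [Finite ι] [DecidableEq ι]
    {K : Subgroup (Perm (ι × ℕ))} (hswap : ∀ p q, swap p q ∈ K)
    (hshift : ∀ i, ∃ g ∈ K, ∃ k > 0, ∀ᶠ x in atTop, g (i, x) = (i, x + k)) :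
    ∃ L ≤ K, L.FG ∧ ∀ p q, swap p q ∈ L := by
  simp only [eventually_atTop] at hshift
  choose g hgK k hk N hN using hshift
  let B : Set (ι × ℕ) := {p | p.2 ≤ N p.1 + k p.1}
  have hB : B.Finite := finite_setOf_snd_le fun i => N i + k i
  let S : Set (Perm (ι × ℕ)) := Set.range g ∪ Set.image2 swap B B
  have hgS (i : ι) : g i ∈ Subgroup.closure S :=
    Subgroup.subset_closure (.inl ⟨i, rfl⟩)
  have hBS {p q : ι × ℕ} (hp : p ∈ B) (hq : q ∈ B) : swap p q ∈ Subgroup.closure S :=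
    Subgroup.subset_closure (.inr ⟨p, hp, q, hq, rfl⟩)
  have hNB (i : ι) : (i, N i) ∈ B := Nat.le_add_right _ _
  have hray (p : ι × ℕ) : swap p (p.1, N p.1) ∈ Subgroup.closure S :=
    swap_mem_of_shift (a := Prod.mk p.1) (hgS p.1) (hk p.1) (hN p.1)
      (fun x hx => hBS (p := (p.1, x)) hx (hNB p.1)) p.2
  refine ⟨Subgroup.closure S, ?_, ?_, fun p q => ?_⟩
  · rw [Subgroup.closure_le]
    rintro _ (⟨i, rfl⟩ | ⟨p, -, q, -, rfl⟩)
    exacts [hgK i, hswap p q]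
  · exact (Subgroup.fg_iff _).mpr ⟨S, rfl, (Set.finite_range g).union (hB.image2 _ hB)⟩
  · refine SubmonoidClass.swap_mem_trans _ (hray p) ?_
    refine SubmonoidClass.swap_mem_trans _ (hBS (hNB p.1) (hNB q.1)) ?_
    rw [swap_comm]
    exact hray q

end Swaps

section IsEvTransBy

/-- `f` acts far out on the ray `{i} × ℕ` as the translation by `m`; for an eventual translation
`f` this says `χ_i(f) = m`. -/
def IsEvTransBy {ι : Type*} (f : ι × ℕ → ι × ℕ) (i : ι) (m : ℤ) : Prop :=
  ∀ᶠ x : ℕ in atTop, (f (i, x)).1 = i ∧ ((f (i, x)).2 : ℤ) = x + m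

lemma IsEvTransBy.comp {ι : Type*} {f g : ι × ℕ → ι × ℕ} {i : ι} {m k : ℤ}
    (hf : IsEvTransBy f i m) (hg : IsEvTransBy g i k) : IsEvTransBy (f ∘ g) i (m + k) := by
  have htendsto : Tendsto (fun x => (g (i, x)).2) atTop atTop := by
    refine tendsto_atTop.mpr fun b => ?_
    filter_upwards [hg, eventually_ge_atTop (b - k).toNat] with x hx hbx
    omega
  filter_upwards [hg, htendsto.eventually hf] with x ⟨hgi, hgx⟩ hfx
  have hgix : g (i, x) = (i, (g (i, x)).2) := Prod.ext hgi rfl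
  rw [Function.comp_apply, hgix]
  exact ⟨hfx.1, by rw [hfx.2, hgx]; ring⟩

lemma IsEvTransBy.eventually_eq {ι : Type*} {f : ι × ℕ → ι × ℕ} {i : ι} {k : ℕ}
    (hf : IsEvTransBy f i k) : ∀ᶠ x in atTop, f (i, x) = (i, x + k) :=
  hf.mono fun _ hx => Prod.ext hx.1 (by exact_mod_cast hx.2)

lemma isEvTransBy_zero_iff_finite_compl_fixedBy {ι : Type*} [Finite ι] {f : Perm (ι × ℕ)} :
    (∀ i, IsEvTransBy f i 0) ↔ (MulAction.fixedBy (ι × ℕ) f)ᶜ.Finite := by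
  refine ⟨fun hf => ?_, fun hf i => ?_⟩
  · choose N hN using fun i => eventually_atTop.mp (IsEvTransBy.eventually_eq (k := 0) (hf i))
    refine (finite_setOf_snd_le N).subset fun p hp => ?_
    by_contra hlt
    exact hp (hN p.1 p.2 (not_le.mp hlt).le)
  · have hfin := hf.preimage (Prod.mk_right_injective i).injOn
    rw [IsEvTransBy, ← Nat.cofinite_eq_atTop]
    filter_upwards [hfin.eventually_cofinite_notMem] with x hx
    have hfix : f (i, x) = (i, x) := not_not.mp hx
    simp [hfix]

variable {n : ℕ} {i : Fin n} {f : Fin n × ℕ → Fin n × ℕ}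

lemma isEvTrans_iff : IsEvTrans f ↔ ∀ i, ∃ m, IsEvTransBy f i m := by
  simp only [IsEvTrans, IsEvTransBy, eventually_atTop]

lemma IsEvTransBy.chiF_eq {m : ℤ} (hf : IsEvTransBy f i m) : chiF n i f = m := by
  have hex : ∃ m : ℤ, ∃ N : ℕ, ∀ x : ℕ, N ≤ x →
      (f (i, x)).1 = i ∧ ((f (i, x)).2 : ℤ) = (x : ℤ) + m := ⟨m, eventually_atTop.mp hf⟩
  have hchoose : IsEvTransBy f i hex.choose := eventually_atTop.mpr hex.choose_spec
  obtain ⟨x, hx, hx'⟩ := (hf.and hchoose).exists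
  rw [chiF, dif_pos hex]
  omega

lemma IsEvTrans.isEvTransBy_chiF (hf : IsEvTrans f) (i : Fin n) : IsEvTransBy f i (chiF n i f) := by
  obtain ⟨m, hm⟩ := isEvTrans_iff.mp hf i
  rwa [hm.chiF_eq]

end IsEvTransBy

section RayFlow

variable {ι : Type*} [DecidableEq ι]

/-- The permutation of `ι × ℕ` which moves the ray `j` one step towards its origin, sends the origin
of the ray `j` to that of the ray `i`, and moves the ray `i` one step outwards. -/
def rayFlow {i j : ι} (hij : i ≠ j) : Perm (ι × ℕ) where
  toFun p :=
    if p.1 = i then (i, p.2 + 1)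
    else if p.1 = j then if p.2 = 0 then (i, 0) else (j, p.2 - 1)
    else p
  invFun p :=
    if p.1 = j then (j, p.2 + 1)
    else if p.1 = i then if p.2 = 0 then (j, 0) else (i, p.2 - 1)
    else p
  left_inv p := by grind
  right_inv p := by grind

lemma isEvTransBy_rayFlow {i j : ι} (hij : i ≠ j) (k : ι) :
    IsEvTransBy (rayFlow hij) k ((Pi.single i 1 - Pi.single j 1 : ι → ℤ) k) := by
  filter_upwards [eventually_gt_atTop 0] with x hx
  obtain rfl | hki := eq_or_ne k i
  · simp [rayFlow, hij]
  obtain rfl | hkj := eq_or_ne k j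
  · simp only [rayFlow, coe_fn_mk, hki, hx.ne', if_true, if_false, Pi.sub_apply, Pi.single_eq_same,
      Pi.single_eq_of_ne, ne_eq, not_false_eq_true, true_and]
    omega
  · simp [rayFlow, hki, hkj]

end RayFlow

namespace Houghton

variable {n : ℕ}

/-- The homomorphism `χ = (χ_1, …, χ_n) : H_n → ℤⁿ`. -/
noncomputable def chi (n : ℕ) : Houghton n →* Multiplicative (Fin n → ℤ) :=
  MonoidHom.mk' (fun η => .ofAdd fun i => chiF n i η) fun η θ =>
    funext fun i => ((η.2.isEvTransBy_chiF i).comp (θ.2.isEvTransBy_chiF i)).chiF_eq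

lemma mem_and_chiF_eq_zero_of_finite {f : Perm (Fin n × ℕ)}
    (hf : (MulAction.fixedBy (Fin n × ℕ) f)ᶜ.Finite) : f ∈ Houghton n ∧ ∀ i, chiF n i f = 0 := by
  rw [← isEvTransBy_zero_iff_finite_compl_fixedBy] at hf
  exact ⟨isEvTrans_iff.mpr fun i => ⟨0, hf i⟩, fun i => (hf i).chiF_eq⟩

lemma finite_compl_fixedBy_of_chi_eq_one {η : Houghton n} (hη : chi n η = 1) :
    (MulAction.fixedBy (Fin n × ℕ) (η : Perm (Fin n × ℕ)))ᶜ.Finite := by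
  refine isEvTransBy_zero_iff_finite_compl_fixedBy.mp fun i => ?_
  have hi : chiF n i η = 0 := congrFun hη i
  exact hi ▸ η.2.isEvTransBy_chiF i

lemma chiF_inv {η : Perm (Fin n × ℕ)} (hη : η ∈ Houghton n) (i : Fin n) :
    chiF n i ⇑η⁻¹ = -chiF n i ⇑η :=
  congrFun (map_inv (chi n) ⟨η, hη⟩) i

lemma exists_shift_of_chiF_ne_zero {K : Subgroup (Perm (Fin n × ℕ))} (hK : K ≤ Houghton n)
    {i : Fin n} (hi : ∃ g ∈ K, chiF n i ⇑g ≠ 0) :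
    ∃ g ∈ K, ∃ k > 0, ∀ᶠ x in atTop, g (i, x) = (i, x + k) := by
  obtain ⟨g, hgK, hg⟩ : ∃ g ∈ K, 0 < chiF n i ⇑g := by
    obtain ⟨g, hgK, hg⟩ := hi
    obtain hneg | hpos := lt_or_gt_of_ne hg
    · exact ⟨g⁻¹, K.inv_mem hgK, by rw [chiF_inv (hK hgK)]; omega⟩
    · exact ⟨g, hgK, hpos⟩
  obtain ⟨k, hk⟩ := Int.eq_ofNat_of_zero_le hg.le
  have htrans : IsEvTransBy g i k := hk ▸ IsEvTrans.isEvTransBy_chiF (hK hgK) i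
  exact ⟨g, hgK, k, by omega, htrans.eventually_eq⟩

theorem fg_of_swap_mem_of_chiF_ne_zero {K : Subgroup (Perm (Fin n × ℕ))} (hK : K ≤ Houghton n)
    (hswap : ∀ p q, swap p q ∈ K) (hχ : ∀ i, ∃ g ∈ K, chiF n i ⇑g ≠ 0) : Group.FG K := by
  obtain ⟨L, hLK, hL, hswapL⟩ :=
    exists_fg_le_forall_swap_mem hswap fun i => exists_shift_of_chiF_ne_zero hK (hχ i)
  refine group_fg_of_ker_le_of_fg_range ((chi n).comp (Subgroup.inclusion hK))
    (subgroupOf_fg hLK hL) (fun η hη => ?_) (subgroup_multiplicative_fg _)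
  exact mem_of_finite_compl_fixedBy hswapL (finite_compl_fixedBy_of_chi_eq_one hη)

/-- The element of `H_n` with `χ_i = 1`, `χ_j = -1` and all other `χ_k = 0` given by `rayFlow`. -/
def flow {i j : Fin n} (hij : i ≠ j) : Houghton n :=
  ⟨rayFlow hij, isEvTrans_iff.mpr fun k => ⟨_, isEvTransBy_rayFlow hij k⟩⟩

lemma chi_flow {i j : Fin n} (hij : i ≠ j) :
    chi n (flow hij) = .ofAdd (Pi.single i 1 - Pi.single j 1) :=
  funext fun k => (isEvTransBy_rayFlow hij k).chiF_eq

lemma exists_sum_mul_chiF_eq_zero_and_chiF_ne_zero {c : Fin n → ℤ} {i j k : Fin n} (hik : i ≠ k)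
    (hjk : j ≠ k) (hc : c i ≠ c j) :
    ∃ η ∈ Houghton n, ∑ l, c l * chiF n l ⇑η = 0 ∧ chiF n k ⇑η ≠ 0 := by
  have hij : i ≠ j := fun h => hc (congrArg c h)
  -- `χ(η)` is the cross product of `c` and `(1, …, 1)` in the coordinates `i`, `j`, `k`.
  let η : Houghton n := flow hjk.symm ^ (c i - c j) * flow hij ^ (c j - c k)
  have hη : chi n η = .ofAdd ((c i - c j) • (Pi.single k 1 - Pi.single j 1) +
      (c j - c k) • (Pi.single i 1 - Pi.single j 1)) := by
    rw [map_mul, map_zpow, map_zpow, chi_flow, chi_flow, ofAdd_add, ofAdd_zsmul, ofAdd_zsmul]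
  refine ⟨η, η.2, ?_, ?_⟩
  · change c ⬝ᵥ (chi n η).toAdd = 0
    simp only [hη, toAdd_ofAdd, dotProduct_add, dotProduct_smul, dotProduct_sub,
      dotProduct_single_one, smul_eq_mul]
    ring
  · have hk : (chi n η).toAdd k = c i - c j := by
      simp [hη, hik.symm, hjk.symm, -ofAdd_add]
    exact hk.trans_ne (sub_ne_zero.mpr hc)

end Houghton

lemma exists_single_sub_single_ne {ι : Type*} [Fintype ι] [DecidableEq ι]
    (hι : 3 ≤ Fintype.card ι) {a b : ι} (hab : a ≠ b) (k : ι) :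
    ∃ i j, i ≠ k ∧ j ≠ k ∧
      (Pi.single a 1 - Pi.single b 1 : ι → ℤ) i ≠ (Pi.single a 1 - Pi.single b 1 : ι → ℤ) j := by
  obtain ⟨l, hla, hlb⟩ : ∃ l, l ≠ a ∧ l ≠ b := by
    simpa using Finset.exists_mem_notMem_of_card_lt_card
      (s := {a, b}) (t := Finset.univ) (Finset.card_le_two.trans_lt hι)
  obtain rfl | hka := eq_or_ne k a
  · exact ⟨b, l, hab.symm, hla, by simp [hab.symm, hla, hlb]⟩
  obtain rfl | hkb := eq_or_ne k b
  · exact ⟨a, l, hab, hlb, by simp [hab, hla, hlb]⟩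
  · exact ⟨a, b, hka.symm, hkb.symm, by simp [hab, hab.symm]⟩

open Houghton in
theorem ker_chi1_sub_chi2_fg_general {n : ℕ} (c : Fin n → ℤ)
    (hc : ∀ k, ∃ i j, i ≠ k ∧ j ≠ k ∧ c i ≠ c j) (K : Subgroup (Perm (Fin n × ℕ)))
    (hK : ∀ η : Perm (Fin n × ℕ), η ∈ K ↔ η ∈ Houghton n ∧ ∑ i, c i * chiF n i ⇑η = 0) :
    Group.FG K := by
  refine fg_of_swap_mem_of_chiF_ne_zero (fun η hη => ((hK η).mp hη).1) (fun p q => ?_) fun k => ?_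
  · obtain ⟨hmem, hzero⟩ := mem_and_chiF_eq_zero_of_finite finite_compl_fixedBy_swap
    exact (hK _).mpr ⟨hmem, by simp [hzero]⟩
  · obtain ⟨i, j, hik, hjk, hij⟩ := hc k
    obtain ⟨η, hη, hsum, hk⟩ := exists_sum_mul_chiF_eq_zero_and_chiF_ne_zero hik hjk hij
    exact ⟨η, (hK η).mpr ⟨hη, hsum⟩, hk⟩

/-- For every `n ≥ 3`, the kernel of `χ_1 - χ_2 : H_n → ℤ` is finitely generated. -/
theorem ker_chi1_sub_chi2_fg (n : ℕ) (hn : 3 ≤ n)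
    (K : Subgroup (Equiv.Perm (Fin n × ℕ)))
    (hK : ∀ η : Equiv.Perm (Fin n × ℕ),
      η ∈ K ↔ η ∈ Houghton n ∧
        chiF n ⟨0, by omega⟩ ⇑η - chiF n ⟨1, by omega⟩ ⇑η = 0) :
    Group.FG ↥K := by
  have hne : (⟨0, by omega⟩ : Fin n) ≠ ⟨1, by omega⟩ := by simp
  refine ker_chi1_sub_chi2_fg_general _ (exists_single_sub_single_ne (by simpa using hn) hne) K ?_
  simpa [sub_mul, Pi.single_apply] using hK
end

section
/- A nontrivial normal subgroup of the Houghton group H_2 is finitely generated if and only if it has finite index in H_2. -/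
/-!
Glue the two rays into a copy of `ℤ`. An element of `H_2` translates by `a` near `+∞` and by `b`
near `-∞`, and counting the image of a long interval gives `a = b`; hence `H_2` is generated by the
normal subgroup `F` of finitary permutations and the unit shift `t`.

A finitely generated `N` inside `F` would be supported on a finite set, but conjugation by powers
of `t` moves supports arbitrarily far, so `N` would be trivial. Hence a nontrivial finitely
generated normal `N` contains a non-finitary `g`, which agrees almost everywhere with some `t ^ k`,
`k ≠ 0`, so that `t ^ k ∈ N F`. Moreover `g` moves some `x` with `g (g x) ≠ x`, and the commutator
of `g` with the transposition of `x` and `g x` is a 3-cycle in `N`. Conjugating it by `F`, all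
transpositions become equal modulo `N`. So `N` has index at most two in `N F`, which has finite
index in `H_2`. Conversely `H_2` is generated by `t` and one transposition of adjacent points, and
finite index subgroups inherit finite generation.
-/

open Equiv Filter MulAction

section General

variable {G : Type*} [Group G] {α : Type*}

lemma relIndex_sup_zpowers_ne_zero {N : Subgroup G} [N.Normal] {x : G} {k : ℤ} (hk : k ≠ 0)
    (hx : x ^ k ∈ N) : N.relIndex (N ⊔ Subgroup.zpowers x) ≠ 0 := by
  have hfin : IsOfFinOrder (QuotientGroup.mk' N x) :=
    isOfFinOrder_iff_zpow_eq_one.2 ⟨k, hk, (QuotientGroup.eq_one_iff _).2 hx⟩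
  have hker := Subgroup.relIndex_ker (Subgroup.zpowers x) (QuotientGroup.mk' N)
  rw [QuotientGroup.ker_mk', MonoidHom.map_zpowers, Nat.card_zpowers] at hker
  rw [Subgroup.relIndex_sup_left, hker]
  exact orderOf_ne_zero_iff.2 hfin

lemma exists_finite_le_fixingSubgroup_compl [MulAction G α] {N : Subgroup G} (hfg : N.FG)
    (hfin : ∀ g ∈ N, (fixedBy α g)ᶜ.Finite) :
    ∃ U : Set α, U.Finite ∧ N ≤ fixingSubgroup G Uᶜ := by
  obtain ⟨A, rfl⟩ := hfg
  refine ⟨⋃ g ∈ A, (fixedBy α g)ᶜ,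
    A.finite_toSet.biUnion fun g hg ↦ hfin g (Subgroup.subset_closure hg), ?_⟩
  refine (Subgroup.closure_le _).2 fun g hg ↦ (mem_fixingSubgroup_iff G).2 fun x hx ↦ ?_
  by_contra hgx
  exact hx (Set.mem_biUnion hg hgx)

lemma eq_bot_of_fg_of_finite_compl_fixedBy [MulAction G α] [FaithfulSMul G α] {N : Subgroup G}
    [hN : N.Normal] (hfg : N.FG) (hfin : ∀ g ∈ N, (fixedBy α g)ᶜ.Finite)
    (horb : ∀ x : α, (orbit G x).Infinite) : N = ⊥ := by
  obtain ⟨U, hU, hNU⟩ := exists_finite_le_fixingSubgroup_compl hfg hfin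
  refine (Subgroup.eq_bot_iff_forall N).2 fun g hg ↦
    FaithfulSMul.eq_of_smul_eq_smul (α := α) fun x ↦ ?_
  obtain ⟨_, ⟨h, rfl⟩, hx⟩ := (horb x).exists_notMem_finite hU
  have hfix := (mem_fixingSubgroup_iff G).1 (hNU (hN.conj_mem g hg h)) (h • x) hx
  simpa [mul_smul] using hfix

end General

/-- The group of finitary permutations of `α`, those moving only finitely many points; it
accounts for the part of `H_2` that is invisible at infinity. The condition is phrased with the
cofinite filter so that membership combines with other eventual equalities. -/
def finitaryPerm (α : Type*) : Subgroup (Perm α) where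
  carrier := {σ | ∀ᶠ x in cofinite, σ x = x}
  one_mem' := by simp
  mul_mem' {σ τ} (hσ : ∀ᶠ x in cofinite, σ x = x) (hτ : ∀ᶠ x in cofinite, τ x = x) :=
    hσ.mp <| hτ.mono fun x hτx hσx ↦ by rw [Perm.mul_apply, hτx, hσx]
  inv_mem' {σ} (hσ : ∀ᶠ x in cofinite, σ x = x) :=
    hσ.mono fun _ hx ↦ Perm.inv_eq_iff_eq.2 hx.symm

namespace finitaryPerm

variable {α : Type*}

lemma mem_iff {σ : Perm α} : σ ∈ finitaryPerm α ↔ ∀ᶠ x in cofinite, σ x = x := Iff.rfl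

lemma mem_iff_finite_compl_fixedBy {σ : Perm α} :
    σ ∈ finitaryPerm α ↔ (fixedBy α σ)ᶜ.Finite := Iff.rfl

lemma inv_mul_mem_iff {σ τ : Perm α} :
    σ⁻¹ * τ ∈ finitaryPerm α ↔ ∀ᶠ x in cofinite, τ x = σ x := by
  simp only [mem_iff, Perm.mul_apply, Perm.inv_eq_iff_eq]

instance : (finitaryPerm α).Normal where
  conj_mem σ hσ τ := (τ⁻¹.injective.tendsto_cofinite.eventually hσ).mono fun x hx ↦ by
    rw [Perm.mul_apply, Perm.mul_apply, hx]
    exact τ.apply_symm_apply x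

variable [DecidableEq α]

lemma swap_mem (x y : α) : swap x y ∈ finitaryPerm α :=
  mem_iff_finite_compl_fixedBy.2 finite_compl_fixedBy_swap

lemma le_iff {K : Subgroup (Perm α)} : finitaryPerm α ≤ K ↔ ∀ x y, swap x y ∈ K := by
  refine ⟨fun h x y ↦ h (swap_mem x y), fun h ↦ ?_⟩
  calc finitaryPerm α
      ≤ Subgroup.closure {σ | σ.IsSwap} := fun σ hσ ↦
        mem_closure_isSwap'.2 (mem_iff_finite_compl_fixedBy.1 hσ)
    _ ≤ K := (Subgroup.closure_le K).2 <| by rintro _ ⟨x, y, -, rfl⟩; exact h x y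

lemma le_of_sameCycle {K : Subgroup (Perm α)} {t : Perm α} {x : α} (ht : t ∈ K)
    (hcycle : ∀ y, t.SameCycle x y) (hswap : swap x (t x) ∈ K) : finitaryPerm α ≤ K := by
  have hadj (k : ℤ) : swap ((t ^ k) x) ((t ^ (k + 1)) x) ∈ K := by
    rw [zpow_add_one, Perm.mul_apply, swap_apply_apply]
    exact K.mul_mem (K.mul_mem (K.zpow_mem ht k) hswap) (K.inv_mem (K.zpow_mem ht k))
  have hbase (k : ℤ) : swap x ((t ^ k) x) ∈ K := by
    induction k using Int.induction_on with
    | zero => rw [zpow_zero, Perm.one_apply, swap_self]; exact one_mem K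
    | succ n ih => exact SubmonoidClass.swap_mem_trans K ih (hadj n)
    | pred n ih =>
      refine SubmonoidClass.swap_mem_trans K ih ?_
      rw [swap_comm]
      simpa using hadj (-n - 1)
  refine le_iff.2 fun y z ↦ ?_
  obtain ⟨j, rfl⟩ := hcycle y
  obtain ⟨k, rfl⟩ := hcycle z
  exact SubmonoidClass.swap_mem_trans K (swap_comm x _ ▸ hbase j) (hbase k)

omit [DecidableEq α] in
lemma exists_apply_eq {ι : Type*} {f g : ι → α} (s : Finset ι) (hf : Set.InjOn f s)
    (hg : Set.InjOn g s) : ∃ σ ∈ finitaryPerm α, ∀ i ∈ s, σ (f i) = g i := by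
  classical
  induction s using Finset.induction_on with
  | empty => exact ⟨1, one_mem _, by simp⟩
  | insert a s ha ih =>
    have hsub : (s : Set ι) ⊆ ↑(insert a s) := by simp
    obtain ⟨σ, hσ, hσs⟩ := ih (hf.mono hsub) (hg.mono hsub)
    refine ⟨swap (σ (f a)) (g a) * σ, mul_mem (swap_mem _ _) hσ, fun i hi ↦ ?_⟩
    obtain rfl | his := Finset.mem_insert.1 hi
    · simp
    have hia : i ≠ a := ne_of_mem_of_not_mem his ha
    have hfi : σ (f i) ≠ σ (f a) := fun h ↦
      hia (hf hi (Finset.mem_insert_self a s) (σ.injective h))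
    have hgi : σ (f i) ≠ g a := fun h ↦
      hia (hg hi (Finset.mem_insert_self a s) ((hσs i his).symm.trans h))
    rw [Perm.mul_apply, swap_apply_of_ne_of_ne hfi hgi, hσs i his]

section Normalized

variable {M : Subgroup (Perm α)} (hM : finitaryPerm α ≤ Subgroup.normalizer M)
include hM

omit [DecidableEq α] in
lemma conj_mem {σ g : Perm α} (hσ : σ ∈ finitaryPerm α) (hg : g ∈ M) : σ * g * σ⁻¹ ∈ M :=
  (Subgroup.mem_normalizer_iff.1 (hM hσ) g).1 hg

lemma swap_mul_swap_apply_mem {g : Perm α} (hg : g ∈ M) (x : α) :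
    swap (g x) (g (g x)) * swap x (g x) ∈ M := by
  have hcomm := mul_mem hg (conj_mem hM (swap_mem x (g x)) (inv_mem hg))
  simpa [swap_apply_apply, mul_assoc] using hcomm

lemma swap_mul_swap_mem_of_path {g : Perm α} (hg : g ∈ M) {x : α} (hx : g (g x) ≠ x) {a b c : α}
    (hab : a ≠ b) (hbc : b ≠ c) : swap b c * swap a b ∈ M := by
  obtain rfl | hac := eq_or_ne a c
  · simp [swap_comm b a]
  have hgx : g x ≠ x := fun h ↦ hx (by rw [h, h])
  have hggx : g (g x) ≠ g x := g.injective.ne hgx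
  obtain ⟨σ, hσ, hσg⟩ := exists_apply_eq (f := ![x, g x, g (g x)]) (g := ![a, b, c]) Finset.univ
    (by intro i _ j _
        fin_cases i <;> fin_cases j <;> simp [hx, hgx, hggx, hx.symm, hgx.symm, hggx.symm])
    (by intro i _ j _
        fin_cases i <;> fin_cases j <;> simp [hab, hbc, hac, hab.symm, hbc.symm, hac.symm])
  obtain ⟨rfl, rfl, rfl⟩ : σ x = a ∧ σ (g x) = b ∧ σ (g (g x)) = c :=
    ⟨hσg 0 (by simp), hσg 1 (by simp), hσg 2 (by simp)⟩
  have hconj := conj_mem hM hσ (swap_mul_swap_apply_mem hM hg x)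
  rwa [← conj_mul, ← swap_apply_apply, ← swap_apply_apply] at hconj

lemma swap_mul_swap_mem {g : Perm α} (hg : g ∈ M) {x : α} (hx : g (g x) ≠ x) {a b c d : α}
    (hab : a ≠ b) (hcd : c ≠ d) : swap a b * swap c d ∈ M := by
  obtain rfl | hda := eq_or_ne d a
  · exact swap_mul_swap_mem_of_path hM hg hx hcd hab
  · have h := mul_mem (swap_mul_swap_mem_of_path hM hg hx hda hab)
      (swap_mul_swap_mem_of_path hM hg hx hcd hda)
    rwa [mul_assoc, swap_mul_self_mul] at h

lemma le_sup_zpowers_swap {g : Perm α} (hg : g ∈ M) {x : α} (hx : g (g x) ≠ x) {a b : α}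
    (hab : a ≠ b) : finitaryPerm α ≤ M ⊔ Subgroup.zpowers (swap a b) := by
  refine le_iff.2 fun c d ↦ ?_
  obtain rfl | hcd := eq_or_ne c d
  · rw [swap_self]; exact one_mem _
  rw [← mul_swap_mul_self a b (swap c d)]
  exact mul_mem (Subgroup.mem_sup_left (swap_mul_swap_mem hM hg hx hcd hab))
    (Subgroup.mem_sup_right (Subgroup.mem_zpowers _))

end Normalized

lemma subgroupOf_le_sup_zpowers_swap {G : Subgroup (Perm α)} (hG : finitaryPerm α ≤ G)
    {N : Subgroup G} [N.Normal] {g : G} (hg : g ∈ N) {x : α} (hx : g.1 (g.1 x) ≠ x) {a b : α}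
    (hab : a ≠ b) :
    (finitaryPerm α).subgroupOf G ≤ N ⊔ Subgroup.zpowers ⟨swap a b, hG (swap_mem a b)⟩ := by
  have hnormalizer : G ≤ Subgroup.normalizer (N.map G.subtype) := by
    simpa [N.normalizer_eq_top, ← MonoidHom.range_eq_map] using
      Subgroup.le_normalizer_map (H := N) G.subtype
  rw [← Subgroup.map_subtype_le_map_subtype, Subgroup.map_subgroupOf_eq_of_le hG, Subgroup.map_sup,
    MonoidHom.map_zpowers]
  exact le_sup_zpowers_swap (hG.trans hnormalizer) (Subgroup.mem_map_of_mem G.subtype hg) hx hab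

omit [DecidableEq α] in
lemma relIndex_sup_ne_zero {G : Subgroup (Perm α)} (hG : finitaryPerm α ≤ G)
    {N : Subgroup G} [N.Normal] {g : G} (hg : g ∈ N) {x : α} (hx : g.1 (g.1 x) ≠ x) :
    N.relIndex (N ⊔ (finitaryPerm α).subgroupOf G) ≠ 0 := by
  classical
  have hgx : g.1 x ≠ x := fun h ↦ hx (by rw [h, h])
  have hsq : (⟨swap (g.1 x) x, hG (swap_mem _ _)⟩ : G) ^ (2 : ℤ) = 1 :=
    Subtype.ext (by simp [zpow_ofNat, pow_two])
  exact mt (Subgroup.relIndex_eq_zero_of_le_right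
      (sup_le le_sup_left (subgroupOf_le_sup_zpowers_swap hG hg hx hgx)))
    (relIndex_sup_zpowers_ne_zero two_ne_zero (hsq ▸ one_mem N))

end finitaryPerm

lemma eq_of_eventually_eq_add {σ : Perm ℤ} {a b : ℤ} (ha : ∀ᶠ j in atTop, σ j = j + a)
    (hb : ∀ᶠ j in atBot, σ j = j + b) : a = b := by
  obtain ⟨A, hA⟩ := eventually_atTop.1 ha
  obtain ⟨B, hB⟩ := eventually_atBot.1 hb
  obtain ⟨M, hMA, hMB, hM⟩ : ∃ M, A ≤ M ∧ -B ≤ M ∧ 0 < M :=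
    ⟨max A (max (-B) 1), by omega, by omega, by omega⟩
  have htop : σ '' Set.Ici M = Set.Ici (M + a) := by
    rw [← Set.image_add_const_Ici]
    exact Set.image_congr fun j (hj : M ≤ j) ↦ hA j (by omega)
  have hbot : σ '' Set.Iio (-M) = Set.Iio (-M + b) := by
    rw [← Set.image_add_const_Iio]
    exact Set.image_congr fun j (hj : j < -M) ↦ hB j (by omega)
  have hmid : σ '' Set.Ico (-M) M = Set.Ico (-M + b) (M + a) := by
    have hcompl (l u : ℤ) : Set.Ico l u = (Set.Iio l ∪ Set.Ici u)ᶜ := by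
      ext; simp
    rw [hcompl, hcompl, Set.image_compl_eq σ.bijective, Set.image_union, htop, hbot]
  have hcard := Set.ncard_image_of_injective (Set.Ico (-M) M) σ.injective
  rw [hmid, ← Finset.coe_Ico, ← Finset.coe_Ico, Set.ncard_coe_finset, Set.ncard_coe_finset,
    Int.card_Ico, Int.card_Ico] at hcard
  omega

namespace Houghton

lemma finitaryPerm_le (n : ℕ) : finitaryPerm (Fin n × ℕ) ≤ Houghton n := by
  intro σ hσ i
  have hray : ∀ᶠ x : ℕ in atTop, σ (i, x) = (i, x) := by
    rw [← Nat.cofinite_eq_atTop]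
    exact (Prod.mk_right_injective i).tendsto_cofinite.eventually hσ
  obtain ⟨N, hN⟩ := eventually_atTop.1 hray
  exact ⟨0, N, fun x hx ↦ by simp [hN x hx]⟩

/-- The two rays glued into a line: the ray `0` is the nonnegative half of `ℤ`, and the ray `1`
runs away from it through `-1, -2, …`. -/
def line : ℤ ≃ Fin 2 × ℕ where
  toFun
    | .ofNat x => (0, x)
    | .negSucc x => (1, x)
  invFun
    | (0, x) => .ofNat x
    | (1, x) => .negSucc x
  left_inv := by rintro (x | x) <;> rfl
  right_inv := by rintro ⟨i, x⟩; fin_cases i <;> rfl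

lemma line_natCast (x : ℕ) : line x = (0, x) := rfl

lemma line_negSucc (x : ℕ) : line (Int.negSucc x) = (1, x) := rfl

/-- The unit translation of `line`, which together with the finitary permutations generates
`H_2`. -/
def shift : Perm (Fin 2 × ℕ) := line.permCongr (Equiv.addRight 1)

lemma shift_line (j : ℤ) : shift (line j) = line (j + 1) := by simp [shift]

lemma shift_zpow_line (k j : ℤ) : (shift ^ k) (line j) = line (j + k) := by
  induction k using Int.induction_on generalizing j with
  | zero => simp
  | succ n ih => rw [zpow_add_one, Perm.mul_apply, shift_line, ih]; congr 1; ring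
  | pred n ih =>
    have hinv : shift⁻¹ (line j) = line (j - 1) := by
      rw [Perm.inv_eq_iff_eq, shift_line, sub_add_cancel]
    rw [zpow_sub_one, Perm.mul_apply, hinv, ih]; congr 1; ring

lemma shift_zpow_apply_injective (p : Fin 2 × ℕ) :
    Function.Injective fun k : ℤ ↦ (shift ^ k) p := by
  obtain ⟨j, rfl⟩ := line.surjective p
  intro k l hkl
  simpa [shift_zpow_line] using hkl

lemma sameCycle_shift (p q : Fin 2 × ℕ) : shift.SameCycle p q := by
  obtain ⟨i, rfl⟩ := line.surjective p
  obtain ⟨j, rfl⟩ := line.surjective q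
  exact ⟨j - i, by rw [shift_zpow_line, add_sub_cancel]⟩

lemma shift_mem : shift ∈ Houghton 2 := by
  refine Fin.forall_fin_two.2 ⟨⟨1, 0, fun x _ ↦ ?_⟩, ⟨-1, 1, fun x hx ↦ ?_⟩⟩
  · have hx : shift (0, x) = (0, x + 1) := shift_line x
    simp [hx]
  · obtain ⟨y, rfl⟩ := Nat.exists_eq_add_of_le' hx
    have hy : shift (1, y + 1) = (1, y) := by
      rw [← line_negSucc, shift_line, ← line_negSucc]
      congr 1
    simp [hy]

lemma exists_eventually_atTop {h : Perm (Fin 2 × ℕ)} (hh : h ∈ Houghton 2) :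
    ∃ a : ℤ, ∀ᶠ j in atTop, h (line j) = line (j + a) := by
  obtain ⟨a, A, hA⟩ := hh 0
  refine ⟨a, ?_⟩
  filter_upwards [eventually_ge_atTop (A : ℤ)] with j hj
  lift j to ℕ using by omega
  obtain ⟨hfst, hsnd⟩ := hA j (by omega)
  rw [← hsnd, line_natCast, line_natCast]
  exact Prod.ext hfst rfl

lemma exists_eventually_atBot {h : Perm (Fin 2 × ℕ)} (hh : h ∈ Houghton 2) :
    ∃ b : ℤ, ∀ᶠ j in atBot, h (line j) = line (j + b) := by
  obtain ⟨b, B, hB⟩ := hh 1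
  refine ⟨-b, ?_⟩
  filter_upwards [eventually_lt_atBot (-B : ℤ)] with j hj
  obtain ⟨x, rfl⟩ := Int.eq_negSucc_of_lt_zero (show j < 0 by omega)
  obtain ⟨hfst, hsnd⟩ := hB x (by omega)
  have hj : Int.negSucc x + -b = Int.negSucc (h (1, x)).2 := by omega
  rw [hj, line_negSucc, line_negSucc]
  exact Prod.ext hfst rfl

lemma exists_eventually_eq_shift_zpow {h : Perm (Fin 2 × ℕ)} (hh : h ∈ Houghton 2) :
    ∃ k : ℤ, ∀ᶠ p in cofinite, h p = (shift ^ k) p := by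
  obtain ⟨k, htop⟩ := exists_eventually_atTop hh
  obtain ⟨l, hbot⟩ := exists_eventually_atBot hh
  obtain rfl : k = l := eq_of_eventually_eq_add (σ := line.symm.permCongr h)
    (htop.mono fun j hj ↦ by simp [hj]) (hbot.mono fun j hj ↦ by simp [hj])
  have hline : ∀ᶠ j in cofinite, h (line j) = line (j + k) := by
    rw [Int.cofinite_eq]
    exact eventually_sup.2 ⟨hbot, htop⟩
  refine ⟨k, (line.symm.injective.tendsto_cofinite.eventually hline).mono fun p hp ↦ ?_⟩
  rwa [← shift_zpow_line, line.apply_symm_apply] at hp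

lemma eq_finitaryPerm_sup_zpowers_shift :
    Houghton 2 = finitaryPerm (Fin 2 × ℕ) ⊔ Subgroup.zpowers shift := by
  refine le_antisymm (fun h hh ↦ ?_)
    (sup_le (finitaryPerm_le 2) (Subgroup.zpowers_le.2 shift_mem))
  obtain ⟨k, hk⟩ := exists_eventually_eq_shift_zpow hh
  rw [← mul_inv_cancel_left (shift ^ k) h]
  exact mul_mem (Subgroup.mem_sup_right (Subgroup.zpow_mem_zpowers shift k))
    (Subgroup.mem_sup_left (finitaryPerm.inv_mul_mem_iff.2 hk))

lemma eq_closure_swap_shift :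
    Houghton 2 = Subgroup.closure {swap (0, 0) (shift (0, 0)), shift} := by
  apply le_antisymm
  · have hswap := Subgroup.subset_closure (Set.mem_insert (swap (0, 0) (shift (0, 0))) {shift})
    have hshift := Subgroup.subset_closure
      (Set.mem_insert_of_mem (swap (0, 0) (shift (0, 0))) (Set.mem_singleton shift))
    rw [eq_finitaryPerm_sup_zpowers_shift, sup_le_iff, Subgroup.zpowers_le]
    exact ⟨finitaryPerm.le_of_sameCycle hshift (sameCycle_shift _) hswap, hshift⟩
  · rw [Subgroup.closure_le, Set.pair_subset_iff]
    exact ⟨finitaryPerm_le 2 (finitaryPerm.swap_mem _ _), shift_mem⟩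

instance : Group.FG (Houghton 2) :=
  (Group.fg_iff_subgroup_fg _).2 <|
    (Subgroup.fg_iff _).2 ⟨_, eq_closure_swap_shift.symm, Set.toFinite _⟩

lemma infinite_orbit (p : Fin 2 × ℕ) : (orbit (Houghton 2) p).Infinite := by
  refine (Set.infinite_range_of_injective (shift_zpow_apply_injective p)).mono ?_
  rintro _ ⟨k, rfl⟩
  exact ⟨⟨shift ^ k, zpow_mem shift_mem k⟩, rfl⟩

lemma exists_apply_apply_ne {g : Perm (Fin 2 × ℕ)} {k : ℤ} (hk : k ≠ 0)
    (hg : ∀ᶠ p in cofinite, g p = (shift ^ k) p) : ∃ p, g (g p) ≠ p := by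
  obtain ⟨p, hp, hgp⟩ := (hg.and ((shift ^ k).injective.tendsto_cofinite.eventually hg)).exists
  refine ⟨p, fun h ↦ hk ?_⟩
  rw [hp, hgp, ← Perm.mul_apply, ← zpow_add] at h
  have := shift_zpow_apply_injective p (h.trans (by simp : p = (shift ^ (0 : ℤ)) p))
  omega

lemma finitaryPerm_sup_zpowers_shift_eq_top :
    (finitaryPerm _).subgroupOf (Houghton 2) ⊔ Subgroup.zpowers ⟨shift, shift_mem⟩ = ⊤ := by
  apply Subgroup.map_injective (Houghton 2).subtype_injective
  rw [Subgroup.map_sup, Subgroup.map_subgroupOf_eq_of_le (finitaryPerm_le 2),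
    MonoidHom.map_zpowers, ← MonoidHom.range_eq_map, Subgroup.range_subtype]
  exact eq_finitaryPerm_sup_zpowers_shift.symm

variable {N : Subgroup (Houghton 2)} [N.Normal]

lemma exists_notMem_finitaryPerm_of_fg (hfg : N.FG) (hnt : N ≠ ⊥) :
    ∃ g ∈ N, (g : Perm (Fin 2 × ℕ)) ∉ finitaryPerm (Fin 2 × ℕ) := by
  by_contra! hfin
  exact hnt (eq_bot_of_fg_of_finite_compl_fixedBy hfg
    (fun g hg ↦ finitaryPerm.mem_iff_finite_compl_fixedBy.1 (hfin g hg)) infinite_orbit)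

lemma finiteIndex_of_notMem_finitaryPerm {g : Houghton 2} (hg : g ∈ N)
    (hgfin : (g : Perm (Fin 2 × ℕ)) ∉ finitaryPerm (Fin 2 × ℕ)) : N.FiniteIndex := by
  set F := (finitaryPerm (Fin 2 × ℕ)).subgroupOf (Houghton 2)
  set T : Houghton 2 := ⟨shift, shift_mem⟩
  obtain ⟨k, hk⟩ := exists_eventually_eq_shift_zpow g.2
  have hk0 : k ≠ 0 := by rintro rfl; exact hgfin hk
  obtain ⟨p, hp⟩ := exists_apply_apply_ne hk0 hk
  have hNF : N.relIndex (N ⊔ F) ≠ 0 :=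
    finitaryPerm.relIndex_sup_ne_zero (finitaryPerm_le 2) hg hp
  have hTk : T ^ k ∈ N ⊔ F := by
    have hF : (T ^ k)⁻¹ * g ∈ F := finitaryPerm.inv_mul_mem_iff.2 hk
    rw [← inv_mem_iff, ← mul_inv_cancel_right (T ^ k)⁻¹ g]
    exact mul_mem (Subgroup.mem_sup_right hF) (Subgroup.mem_sup_left (inv_mem hg))
  have hindex : (N ⊔ F).index ≠ 0 := by
    have htop : N ⊔ F ⊔ Subgroup.zpowers T = ⊤ := top_le_iff.1 <|
      finitaryPerm_sup_zpowers_shift_eq_top.ge.trans (sup_le_sup_right le_sup_right _)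
    rw [← Subgroup.relIndex_top_right, ← htop]
    exact relIndex_sup_zpowers_ne_zero hk0 hTk
  exact ⟨Subgroup.relIndex_mul_index (le_sup_left : N ≤ N ⊔ F) ▸ mul_ne_zero hNF hindex⟩

end Houghton

/-- A nontrivial normal subgroup of `H_2` is finitely generated if and only if it has
finite index. -/
theorem normal_subgroup_H2_fg_iff_finite_index (N : Subgroup ↥(Houghton 2))
    (hN : N.Normal) (hnt : N ≠ ⊥) :
    Group.FG ↥N ↔ N.FiniteIndex := by
  refine ⟨fun hfg ↦ ?_, fun _ ↦ Subgroup.fg_of_index_ne_zero N⟩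
  obtain ⟨g, hg, hgfin⟩ :=
    Houghton.exists_notMem_finitaryPerm_of_fg ((Group.fg_iff_subgroup_fg N).1 hfg) hnt
  exact Houghton.finiteIndex_of_notMem_finitaryPerm hg hgfin
end
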